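/- For every F_σ ideal I on ℕ containing all finite subsets of ℕ, there is a sequence of colorings {cₙ}ₙ (cₙ : [ℕ]ⁿ → 2) such that I = I_{S({cₙ})}. -/

import Mathlib

/-- `x` is a subset of `y`, for subsets of `α` coded as characteristic functions. -/
def subB {α : Type} (x y : α → Bool) : Prop := ∀ a, x a = true → y a = true

/-- Union of two subsets of `α` coded as characteristic functions. -/
def unionB {α : Type} (x y : α → Bool) : α → Bool := fun a => x a || y a

/-- The set coded by a characteristic function. -/
def suppB {α : Type} (x : α → Bool) : Set α := {a | x a = true}

/-- The coded set is infinite. -/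
def InfiniteB {α : Type} (x : α → Bool) : Prop := (suppB x).Infinite

/-- `I` is an ideal: closed under subsets and (finite) unions. -/
def IsIdealB {α : Type} (I : Set (α → Bool)) : Prop :=
  (∀ x ∈ I, ∀ y, subB y x → y ∈ I) ∧ ∀ x ∈ I, ∀ y ∈ I, unionB x y ∈ I

/-- `I` is tall: every infinite set has an infinite subset in `I`. -/
def IsTallB {α : Type} (I : Set (α → Bool)) : Prop :=
  ∀ x, InfiniteB x → ∃ y ∈ I, InfiniteB y ∧ subB y x

/-- `I` contains all finite sets. -/
def ContainsFinB {α : Type} (I : Set (α → Bool)) : Prop :=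
  ∀ x : α → Bool, (suppB x).Finite → x ∈ I

/-- `I` is an `F_σ` subset of the Cantor space `α → Bool`. -/
def IsFsigmaB {α : Type} (I : Set (α → Bool)) : Prop :=
  ∃ F : ℕ → Set (α → Bool), (∀ n, IsClosed (F n)) ∧ I = ⋃ n, F n

/-- Katětov order: `I ≤_K J` via some `f` with `f⁻¹[A] ∈ J` for all `A ∈ I`. -/
def KatLE {α β : Type} (I : Set (α → Bool)) (J : Set (β → Bool)) : Prop :=
  ∃ f : β → α, ∀ x ∈ I, (fun b => x (f b)) ∈ J


/-- `⟨K⟩ⁿ`: unions of `n+1` elements of `K`. -/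
def angleB (K : Set (ℕ → Bool)) (n : ℕ) : Set (ℕ → Bool) :=
  {x | ∃ f : Fin (n + 1) → (ℕ → Bool), (∀ i, f i ∈ K) ∧ ∀ m, x m = true ↔ ∃ i, f i m = true}

/-- `↓M`: downward closure of `M`. -/
def downB (M : Set (ℕ → Bool)) : Set (ℕ → Bool) := {x | ∃ y ∈ M, subB x y}

/-- `I_K = ⋃ₙ ↓⟨K⟩ⁿ`. -/
def IdealOfCode (K : Set (ℕ → Bool)) : Set (ℕ → Bool) := ⋃ n, downB (angleB K n)


/-- `A` is monochromatic for a coloring `c` of the `n`-element subsets of `ℕ`: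
`c` takes at most one value on `[A]ⁿ`. -/
def MonoB {β : Type} (n : ℕ) (A : Set ℕ) (c : Finset ℕ → β) : Prop :=
  ∀ s t : Finset ℕ, s.card = n → t.card = n → ↑s ⊆ A → ↑t ⊆ A → c s = c t


/-- `S({cₙ})`: the sets simultaneously monochromatic for the sequence of colorings `cₙ`. -/
def SimMonoB (cs : ℕ → Finset ℕ → Bool) : Set (ℕ → Bool) :=
  {x | ∀ n, MonoB n (suppB x) (cs n)}

/-!
Write the ideal as an increasing union of closed hereditary families `G 0 ⊆ G 1 ⊆ ⋯` and give an
`n`-element set `s` the color `1` when `s ∈ G m` for every `m ∈ s` below `n`.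
If `x ∈ G n`, all finite subsets of `x ∩ [n, ∞)` get the color `1`, so `x` is a simultaneously
monochromatic set up to finitely many points. Conversely, an infinite simultaneously monochromatic
set `A` contains `n`-element sets lying above `n`, which have the color `1`; hence so do all finite
subsets of `A`. Fixing `m ∈ A`, the finite subsets of `A` that contain `m` and have more than `m`
elements therefore lie in `G m`. They converge to `A`, and `G m` is closed, so `A ∈ G m`.
-/

open Set Filter Topology

section Order

variable {X : Type*} [TopologicalSpace X] [CompactSpace X] [Preorder X] [OrderClosedTopology X]

theorem isClosed_lowerClosure_of_compactSpace {F : Set X} (hF : IsClosed F) :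
    IsClosed (lowerClosure F : Set X) := by
  have hgraph : IsClosed {p : X × X | p.2 ∈ F ∧ p.1 ≤ p.2} :=
    (hF.preimage continuous_snd).inter isClosed_le_prod
  convert isClosedMap_fst_of_compactSpace _ hgraph
  ext x
  simp

theorem exists_monotone_isClosed_isLowerSet_iUnion_eq {F : ℕ → Set X} (hF : ∀ n, IsClosed (F n))
    (hlower : IsLowerSet (⋃ n, F n)) :
    ∃ G : ℕ → Set X, Monotone G ∧ (∀ n, IsClosed (G n)) ∧ (∀ n, IsLowerSet (G n)) ∧
      ⋃ n, G n = ⋃ n, F n := by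
  refine ⟨accumulate fun n ↦ (lowerClosure (F n) : Set X), monotone_accumulate, fun n ↦ ?_,
    fun n ↦ isLowerSet_iUnion₂ fun i _ ↦ (lowerClosure (F i)).lower, ?_⟩
  · exact (finite_Iic n).isClosed_biUnion fun i _ ↦ isClosed_lowerClosure_of_compactSpace (hF i)
  · rw [iUnion_accumulate, ← LowerSet.coe_iSup, ← lowerClosure_iUnion, hlower.lowerClosure]

end Order

instance : OrderClosedTopology Bool := ⟨isClosed_discrete _⟩

section CharacteristicFunctions

variable {α : Type}

theorem subB_iff_le {x y : α → Bool} : subB x y ↔ x ≤ y :=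
  forall_congr' fun _ ↦ Bool.le_iff_imp.symm

@[simp]
theorem suppB_boolIndicator (s : Set α) : suppB s.boolIndicator = s :=
  s.preimage_boolIndicator_true

theorem boolIndicator_le_iff {x : α → Bool} {s : Set α} : s.boolIndicator ≤ x ↔ s ⊆ suppB x := by
  simp only [← subB_iff_le, subB, ← mem_iff_boolIndicator]
  rfl

theorem tendsto_boolIndicator_filter (x : α → Bool) :
    Tendsto (fun s : Finset α ↦ (↑{a ∈ s | x a = true} : Set α).boolIndicator) atTop (𝓝 x) := by
  refine tendsto_pi_nhds.2 fun a ↦ tendsto_const_nhds.congr' ?_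
  filter_upwards [eventually_ge_atTop {a}] with s hs
  have ha : a ∈ s := Finset.singleton_subset_iff.1 hs
  simp [boolIndicator, ha]

theorem mem_of_isClosed_of_boolIndicator_mem {C : Set (α → Bool)} (hC : IsClosed C) {x : α → Bool}
    {t : Finset α} (ht : ↑t ⊆ suppB x)
    (h : ∀ s : Finset α, t ⊆ s → ↑s ⊆ suppB x → (s : Set α).boolIndicator ∈ C) : x ∈ C := by
  refine hC.mem_of_tendsto (tendsto_boolIndicator_filter x) ?_
  filter_upwards [eventually_ge_atTop t] with s hts
  exact h _ (fun a ha ↦ Finset.mem_filter.2 ⟨hts ha, ht ha⟩) fun a ha ↦ (Finset.mem_filter.1 ha).2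

theorem finset_sup_apply_eq_true_iff {ι : Type*} {s : Finset ι} {f : ι → α → Bool} {a : α} :
    s.sup f a = true ↔ ∃ i ∈ s, f i a = true := by
  simpa only [Bool.lt_iff, true_and, Finset.sup_apply] using
    Finset.lt_sup_iff (s := s) (f := (f · a)) (a := false)

end CharacteristicFunctions

namespace IsIdealB

variable {α : Type} {I : Set (α → Bool)}

theorem isLowerSet (hI : IsIdealB I) : IsLowerSet I :=
  fun x y hyx hx ↦ hI.1 x hx y (subB_iff_le.2 hyx)

theorem containsFinB_of_subsingleton_mem (hI : IsIdealB I)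
    (hsub : ∀ x, (suppB x).Subsingleton → x ∈ I) : ContainsFinB I := by
  intro x hx
  have hsup : (hx.toFinset.sup fun a ↦ ({a} : Set α).boolIndicator) ∈ I :=
    Finset.sup_induction (hsub _ (by simp [suppB])) hI.2 fun a _ ↦ hsub _ (by simp)
  refine hI.isLowerSet (subB_iff_le.1 fun a ha ↦ ?_) hsup
  have hle := Finset.le_sup (f := fun a ↦ ({a} : Set α).boolIndicator) (hx.mem_toFinset.2 ha)
  exact subB_iff_le.2 hle a (by simp [boolIndicator])

theorem mem_of_boolIndicator_diff_mem (hI : IsIdealB I) {x : α → Bool} {s : Set α}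
    (hs : s.boolIndicator ∈ I) (hx : (suppB x \ s).boolIndicator ∈ I) : x ∈ I := by
  refine hI.1 _ (hI.2 _ hx _ hs) x fun a ha ↦ ?_
  by_cases has : a ∈ s <;> simp [unionB, boolIndicator, suppB, ha, has]

end IsIdealB

section IdealOfCode

variable {K I : Set (ℕ → Bool)}

theorem angleB_eq_setOf_sup (K : Set (ℕ → Bool)) (n : ℕ) :
    angleB K n = {x | ∃ f : Fin (n + 1) → ℕ → Bool, (∀ i, f i ∈ K) ∧ x = Finset.univ.sup f} := by
  have heq (x : ℕ → Bool) (f : Fin (n + 1) → ℕ → Bool) :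
      (∀ m, x m = true ↔ ∃ i, f i m = true) ↔ x = Finset.univ.sup f := by
    rw [funext_iff]
    refine forall_congr' fun m ↦ ?_
    rw [Bool.eq_iff_iff (b := Finset.univ.sup f m), finset_sup_apply_eq_true_iff]
    simp only [Finset.mem_univ, true_and]
  simp only [angleB, heq]

theorem mem_idealOfCode_iff {x : ℕ → Bool} : x ∈ IdealOfCode K ↔
    ∃ (n : ℕ) (f : Fin (n + 1) → ℕ → Bool), (∀ i, f i ∈ K) ∧ x ≤ Finset.univ.sup f := by
  simp only [IdealOfCode, downB, angleB_eq_setOf_sup, subB_iff_le, mem_iUnion, mem_ofPred_eq]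
  constructor
  · rintro ⟨n, _, ⟨f, hf, rfl⟩, hx⟩
    exact ⟨n, f, hf, hx⟩
  · rintro ⟨n, f, hf, hx⟩
    exact ⟨n, _, ⟨f, hf, rfl⟩, hx⟩

theorem subset_idealOfCode : K ⊆ IdealOfCode K :=
  fun x hx ↦ mem_idealOfCode_iff.2 ⟨0, fun _ ↦ x, fun _ ↦ hx, by simp⟩

theorem isIdealB_idealOfCode (K : Set (ℕ → Bool)) : IsIdealB (IdealOfCode K) := by
  simp only [IsIdealB, mem_idealOfCode_iff, subB_iff_le]
  constructor
  · rintro x ⟨n, f, hf, hx⟩ y hyx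
    exact ⟨n, f, hf, hyx.trans hx⟩
  · rintro x ⟨n, f, hf, hx⟩ y ⟨m, g, hg, hy⟩
    have hfg : ∀ i, Fin.append f g i ∈ K := Fin.addCases (by simpa using hf) (by simpa using hg)
    refine ⟨n + 1 + m, Fin.append (n := m + 1) f g, hfg, ?_⟩
    refine sup_le (hx.trans <| Finset.sup_le fun i _ ↦ ?_) (hy.trans <| Finset.sup_le fun i _ ↦ ?_)
    · exact (Fin.append_left f g i).ge.trans (Finset.le_sup (Finset.mem_univ _))
    · exact (Fin.append_right f g i).ge.trans (Finset.le_sup (Finset.mem_univ _))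

theorem IsIdealB.idealOfCode_subset (hI : IsIdealB I) (hK : K ⊆ I) : IdealOfCode K ⊆ I := by
  intro x hx
  obtain ⟨n, f, hf, hxf⟩ := mem_idealOfCode_iff.1 hx
  refine hI.isLowerSet hxf ?_
  rw [← Finset.sup'_eq_sup Finset.univ_nonempty]
  exact Finset.sup'_induction _ f hI.2 fun i _ ↦ hK (hf i)

end IdealOfCode

section SimMono

theorem monoB_of_subsingleton {β : Type} {A : Set ℕ} (hA : A.Subsingleton) (n : ℕ)
    (c : Finset ℕ → β) : MonoB n A c := by
  intro s t hs ht hsA htA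
  have hst : s ⊆ t := by
    intro a ha
    obtain ⟨b, hb⟩ : t.Nonempty := Finset.card_pos.1 <| by
      rw [ht, ← hs]
      exact Finset.card_pos.2 ⟨a, ha⟩
    rwa [hA (hsA ha) (htA hb)]
  rw [Finset.eq_of_subset_of_card_le hst (ht.trans hs.symm).le]

theorem containsFinB_idealOfCode_simMonoB (cs : ℕ → Finset ℕ → Bool) :
    ContainsFinB (IdealOfCode (SimMonoB cs)) :=
  (isIdealB_idealOfCode _).containsFinB_of_subsingleton_mem fun _ hx ↦
    subset_idealOfCode fun n ↦ monoB_of_subsingleton hx n (cs n)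

end SimMono

section FiltrationColoring

variable {G : ℕ → Set (ℕ → Bool)}

open Classical in
/-- The coloring of the `n`-element sets attached to a sequence `G` of families of sets: `s` has
color `true` when it belongs to `G m` for each `m ∈ s` with `m < n`. It turns membership in the
`G m` into simultaneous monochromaticity. As in `MonoB`, only its values at sets of cardinality `n`
matter. -/
noncomputable def filtrationColoring (G : ℕ → Set (ℕ → Bool)) (n : ℕ) (s : Finset ℕ) : Bool :=
  decide (∀ m ∈ s, m < n → (s : Set ℕ).boolIndicator ∈ G m)

open Classical in
theorem filtrationColoring_eq_true_iff {n : ℕ} {s : Finset ℕ} :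
    filtrationColoring G n s = true ↔ ∀ m ∈ s, m < n → (s : Set ℕ).boolIndicator ∈ G m :=
  decide_eq_true_iff

theorem boolIndicator_diff_Iio_mem_simMonoB (hmono : Monotone G) {n : ℕ} (hlower : IsLowerSet (G n))
    {x : ℕ → Bool} (hx : x ∈ G n) :
    (suppB x \ Iio n).boolIndicator ∈ SimMonoB (filtrationColoring G) := by
  have htrue (k : ℕ) (s : Finset ℕ) (hs : ↑s ⊆ suppB x \ Iio n) :
      filtrationColoring G k s = true := by
    refine filtrationColoring_eq_true_iff.2 fun m hm _ ↦ ?_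
    have hnm : n ≤ m := not_lt.1 (hs hm).2
    exact hmono hnm (hlower (boolIndicator_le_iff.2 fun a ha ↦ (hs ha).1) hx)
  intro k s t _ _ hs ht
  rw [suppB_boolIndicator] at hs ht
  rw [htrue k s hs, htrue k t ht]

section Infinite

variable {A : ℕ → Bool} (hA : A ∈ SimMonoB (filtrationColoring G)) (hinf : (suppB A).Infinite)
include hA hinf

theorem filtrationColoring_card_eq_true {s : Finset ℕ} (hs : ↑s ⊆ suppB A) :
    filtrationColoring G s.card s = true := by
  obtain ⟨t, ht, htcard⟩ := (hinf.sdiff (finite_Iio s.card)).exists_subset_card_eq s.card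
  rw [hA s.card s t rfl htcard hs fun a ha ↦ (ht ha).1]
  exact filtrationColoring_eq_true_iff.2 fun m hm hlt ↦ absurd hlt (ht hm).2

theorem mem_of_mem_simMonoB_filtrationColoring {m : ℕ} (hG : IsClosed (G m)) (hm : m ∈ suppB A) :
    A ∈ G m := by
  obtain ⟨t, ht, htcard⟩ := hinf.exists_subset_card_eq (m + 1)
  have hmt : ↑(insert m t) ⊆ suppB A := by simpa [insert_subset_iff] using ⟨hm, ht⟩
  refine mem_of_isClosed_of_boolIndicator_mem hG hmt fun s hts hs ↦ ?_
  have hcard : m < s.card := by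
    have := Finset.card_le_card ((Finset.subset_insert m t).trans hts)
    lia
  exact filtrationColoring_eq_true_iff.1 (filtrationColoring_card_eq_true hA hinf hs) m
    (hts (Finset.mem_insert_self m t)) hcard

end Infinite

end FiltrationColoring

/-- Every `F_σ` ideal on `ℕ` containing all finite sets is of the form `I_{S({cₙ})}` for some
sequence of colorings `cₙ : [ℕ]ⁿ → 2`. -/
theorem fSigma_ideal_eq_simMono (I : Set (ℕ → Bool)) (hI : IsIdealB I)
    (hfin : ContainsFinB I) (hF : IsFsigmaB I) :
    ∃ cs : ℕ → Finset ℕ → Bool, I = IdealOfCode (SimMonoB cs) := by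
  obtain ⟨F, hFclosed, rfl⟩ := hF
  obtain ⟨G, hmono, hclosed, hlower, hGF⟩ :=
    exists_monotone_isClosed_isLowerSet_iUnion_eq hFclosed hI.isLowerSet
  rw [← hGF] at hI hfin ⊢
  refine ⟨filtrationColoring G, Subset.antisymm (fun x hx ↦ ?_) (hI.idealOfCode_subset ?_)⟩
  · obtain ⟨n, hn⟩ := mem_iUnion.1 hx
    exact (isIdealB_idealOfCode _).mem_of_boolIndicator_diff_mem
      (containsFinB_idealOfCode_simMonoB _ _ (by simp))
      (subset_idealOfCode (boolIndicator_diff_Iio_mem_simMonoB hmono (hlower n) hn))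
  · intro A hA
    by_cases hinf : (suppB A).Finite
    · exact hfin A hinf
    · obtain ⟨m, hm⟩ := Set.Infinite.nonempty hinf
      exact mem_iUnion.2 ⟨m, mem_of_mem_simMonoB_filtrationColoring hA hinf (hclosed m) hm⟩
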